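/- Suppose (u, s, θ) with u ∈ ℝ^M, s ∈ ℝ^M, θ ∈ ℝ^d satisfies: sᵢ - aᵢᵀθ + bᵢ ≥ 0, uᵢ(sᵢ - aᵢᵀθ + bᵢ) = 0, sᵢ(1 - uᵢ) = 0, 0 ≤ uᵢ ≤ 1, and sᵢ ≥ 0 for all i. Then for every index i with aᵢᵀθ - bᵢ > 0 we have uᵢ = 1. Consequently, Σᵢ uᵢ is at least the number of constraints violated by θ. -/

import Mathlib

open Finset in
theorem relaxed_complementarity_lower_bound
    (M d : ℕ) (a : Fin M → Fin d → ℝ) (b : Fin M → ℝ) (θ : Fin d → ℝ)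
    (u s : Fin M → ℝ)
    (h1 : ∀ i, s i - (∑ k, a i k * θ k) + b i ≥ 0)
    (h2 : ∀ i, u i * (s i - (∑ k, a i k * θ k) + b i) = 0)
    (h3 : ∀ i, s i * (1 - u i) = 0)
    (h4 : ∀ i, 0 ≤ u i ∧ u i ≤ 1)
    (h5 : ∀ i, s i ≥ 0) :
    (∀ i, (∑ k, a i k * θ k) - b i > 0 → u i = 1) ∧
    ({i : Fin M | (∑ k, a i k * θ k) - b i > 0}.ncard : ℝ) ≤ ∑ i, u i := by
  classical
  have key : ∀ i, (∑ k, a i k * θ k) - b i > 0 → u i = 1 := by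
    intro i hi
    have hs : s i ≠ 0 := by
      have := h1 i
      intro h
      linarith
    rcases mul_eq_zero.mp (h3 i) with h | h
    · exact absurd h hs
    · linarith
  refine ⟨key, ?_⟩
  rw [Set.ncard_eq_toFinset_card']
  calc _ = ∑ i ∈ {i : Fin M | (∑ k, a i k * θ k) - b i > 0}.toFinset, (1 : ℝ) := by simp
    _ = ∑ i ∈ {i : Fin M | (∑ k, a i k * θ k) - b i > 0}.toFinset, u i := by
      refine Finset.sum_congr rfl fun i hi => ?_
      have hi2 := Set.mem_toFinset.mp hi
      exact (key i hi2).symm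
    _ ≤ ∑ i, u i :=
      Finset.sum_le_sum_of_subset_of_nonneg (Finset.subset_univ _) fun i _ _ => (h4 i).1
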